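/- arXiv:math/9903189 — 3 statements merged into one kernel-verified Lean document; each statement's English description precedes it below -/
import Mathlib

section
/- Let V be a real Banach space, D and E two closed subsets of V, c ∈ ℝ, and f : V → ℝ a C¹ functional satisfying the local Palais–Smale condition (P.S.)_c. Assume D ∩ E = ∅, E ∩ K_c = ∅ (where K_c = {v ∈ V : f'(v) = 0 and f(v) = c}), f(x) ≤ c for all x ∈ E, and f(x) ≥ c for all x ∈ D. Then there exist ε > 0 and a continuous map η : ℝ × V → V such that: (i) for every t ∈ ℝ, η_t = η(t,·) : V → V is a homeomorphism and η_t⁻¹ = η_{−t}; (ii) f(η(t,x)) ≤ f(x) for all t ≥ 0 and all x ∈ V; (iii) η(t,x) = x for all t ∈ ℝ and all x ∈ D; (iv) f(η(1,x)) ≤ c − ε for all x ∈ E. -/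
open Set Filter

/-!
By the Palais–Smale condition there is a small `δ > 0` such that `‖f'‖ > δ` at every point within
distance `δ` of `E` whose value is within `δ` of `c`. Consider the cone of points whose value lies
`s ≤ δ ^ 2` below `c` and whose distance to `E` is at most `s / δ`. It is closed, contained in the
set where `‖f'‖ > δ`, and disjoint from `D`, because `f ≥ c` on `D` forces `s = 0`. A partition of
unity therefore glues zero and descent directions into a locally Lipschitz field of norm at most
`δ` which never increases `f`, vanishes on `D`, and decreases `f` at rate more than `δ ^ 2` on the
cone. Its flow is global since the field is bounded. A trajectory from `E` cannot rise above the
graph of `c - δ ^ 2 * t` up to time one: whenever it meets the graph it has moved at most `δ * t`,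
so it lies in the cone, where `f` drops faster than the graph.
-/

section LocallyLipschitz

open Topology

variable {X : Type*} [PseudoEMetricSpace X]
variable {F : Type*} [NormedAddCommGroup F]

theorem locallyLipschitz_of_eventuallyEq {Y : Type*} [PseudoEMetricSpace Y] {f : X → Y}
    (h : ∀ x, ∃ g : X → Y, LocallyLipschitz g ∧ f =ᶠ[𝓝 x] g) : LocallyLipschitz f := by
  intro x
  obtain ⟨g, hg, hfg⟩ := h x
  obtain ⟨K, s, hs, hgs⟩ := hg x
  refine ⟨K, _, inter_mem hs hfg, fun y hy z hz => ?_⟩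
  rw [show f y = g y from hy.2, show f z = g z from hz.2]
  exact hgs hy.1 hz.1

theorem locallyLipschitz_comp_of_contDiffAt [NormedSpace ℝ F] {G : Type*}
    [NormedAddCommGroup G] [NormedSpace ℝ G] {Φ : F → G} {f : X → F}
    (hΦ : ∀ x, ContDiffAt ℝ 1 Φ (f x)) (hf : LocallyLipschitz f) :
    LocallyLipschitz (fun x => Φ (f x)) := by
  intro x
  obtain ⟨K, s, hs, hΦs⟩ := (hΦ x).exists_lipschitzOnWith
  obtain ⟨L, t, ht, hft⟩ := hf x
  exact ⟨K * L, _, inter_mem ht (hf.continuous.continuousAt hs),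
    hΦs.comp (hft.mono inter_subset_left) fun _ hy => hy.2⟩

theorem locallyLipschitz_smul [NormedSpace ℝ F] {a : X → ℝ} {g : X → F} (ha : LocallyLipschitz a)
    (hg : LocallyLipschitz g) : LocallyLipschitz (fun x => a x • g x) :=
  locallyLipschitz_comp_of_contDiffAt (Φ := fun p : ℝ × F => p.1 • p.2)
    (fun _ => (contDiff_fst.smul contDiff_snd).contDiffAt) (ha.prodMk hg)

theorem locallyLipschitz_inv₀ {a : X → ℝ} (ha : LocallyLipschitz a) (h0 : ∀ x, a x ≠ 0) :
    LocallyLipschitz (fun x => (a x)⁻¹) :=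
  locallyLipschitz_comp_of_contDiffAt (fun x => contDiffAt_inv ℝ (h0 x)) ha

theorem locallyLipschitz_finset_sum {ι : Type*} {g : ι → X → F} (s : Finset ι)
    (hg : ∀ i, LocallyLipschitz (g i)) : LocallyLipschitz (fun x => ∑ i ∈ s, g i x) := by
  classical
  induction s using Finset.induction_on with
  | empty => simpa only [Finset.sum_empty] using LocallyLipschitz.const (0 : F)
  | insert i s hi ih => simpa only [Finset.sum_insert hi] using (hg i).add ih

theorem locallyLipschitz_finsum {ι : Type*} {g : ι → X → F}
    (hg : ∀ i, LocallyLipschitz (g i)) (hfin : LocallyFinite fun i => Function.support (g i)) :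
    LocallyLipschitz (fun x => ∑ᶠ i, g i x) := by
  refine locallyLipschitz_of_eventuallyEq fun x => ?_
  obtain ⟨s, hs⟩ := finsum_eventually_eq_sum hfin x
  exact ⟨_, locallyLipschitz_finset_sum s hg, hs⟩

end LocallyLipschitz

section PartitionOfUnity

open Topology

theorem exists_lipschitzWith_support_eq {X : Type*} [PseudoMetricSpace X] {U : Set X}
    (hU : IsOpen U) :
    ∃ ρ : X → ℝ, LipschitzWith 1 ρ ∧ (∀ x, 0 ≤ ρ x) ∧ Function.support ρ = U := by
  rcases Uᶜ.eq_empty_or_nonempty with hempty | hne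
  · exact ⟨fun _ => 1, LipschitzWith.const' _, fun _ => zero_le_one, by
      rw [Function.support_const one_ne_zero, ← compl_empty_iff.mp hempty]⟩
  · refine ⟨(Metric.infDist · Uᶜ), Metric.lipschitz_infDist_pt Uᶜ,
      fun _ => Metric.infDist_nonneg, ?_⟩
    ext x
    rw [Function.mem_support, ne_eq, ← hU.isClosed_compl.mem_iff_infDist_zero hne, notMem_compl_iff]

theorem exists_partitionOfUnity_locallyLipschitz {X ι : Type*} [PseudoMetricSpace X] {U : ι → Set X}
    (hU : ∀ i, IsOpen (U i)) (hcover : ⋃ i, U i = univ) :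
    ∃ ρ : PartitionOfUnity ι X,
      ∀ i, LocallyLipschitz (ρ i) ∧ Function.support (ρ i) ⊆ U i := by
  obtain ⟨W, hWopen, hWcover, hWfin, hWU⟩ := precise_refinement U hU hcover
  choose a ha hanonneg hasupp using fun i => exists_lipschitzWith_support_eq (hWopen i)
  have hafin : LocallyFinite fun i => Function.support (a i) := by simpa only [hasupp] using hWfin
  have hpos : ∀ x, 0 < ∑ᶠ i, a i x := fun x => by
    obtain ⟨i, hi⟩ := mem_iUnion.mp (hWcover ▸ mem_univ x)
    rw [← hasupp i] at hi
    exact finsum_pos (fun j => hanonneg j x) ⟨i, (hanonneg i x).lt_of_ne' hi⟩ (hafin.point_finite x)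
  have hinv : LocallyLipschitz fun x => (∑ᶠ i, a i x)⁻¹ :=
    locallyLipschitz_inv₀ (locallyLipschitz_finsum (fun i => (ha i).locallyLipschitz) hafin)
      fun x => (hpos x).ne'
  have hlip : ∀ i, LocallyLipschitz fun x => (∑ᶠ j, a j x)⁻¹ * a i x :=
    fun i => locallyLipschitz_smul hinv (ha i).locallyLipschitz
  have hsupp : ∀ i, Function.support (fun x => (∑ᶠ j, a j x)⁻¹ * a i x) ⊆ Function.support (a i) :=
    fun i => Function.support_mul_subset_right _ _
  have hsum : ∀ x, ∑ᶠ i, (∑ᶠ j, a j x)⁻¹ * a i x = 1 := fun x => by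
    rw [← mul_finsum, inv_mul_cancel₀ (hpos x).ne']
  exact ⟨{ toFun := fun i => ⟨_, (hlip i).continuous⟩
           locallyFinite' := hafin.subset hsupp
           nonneg' := fun i x => mul_nonneg (inv_nonneg.mpr (hpos x).le) (hanonneg i x)
           sum_eq_one' := fun x _ => hsum x
           sum_le_one' := fun x => (hsum x).le },
    fun i => ⟨hlip i, (hsupp i).trans ((hasupp i).trans_subset (hWU i))⟩⟩

theorem exists_locallyLipschitz_forall_mem_convex {X F : Type*} [PseudoMetricSpace X]
    [NormedAddCommGroup F] [NormedSpace ℝ F] {t : X → Set F} (ht : ∀ x, Convex ℝ (t x))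
    (hloc : ∀ x, ∃ w, ∀ᶠ y in 𝓝 x, w ∈ t y) :
    ∃ g : X → F, LocallyLipschitz g ∧ ∀ x, g x ∈ t x := by
  choose w hw using hloc
  obtain ⟨ρ, hρ⟩ := exists_partitionOfUnity_locallyLipschitz
    (fun x : X => isOpen_interior (s := {y | w x ∈ t y}))
    (iUnion_eq_univ_iff.mpr fun x => ⟨x, mem_interior_iff_mem_nhds.mpr (hw x)⟩)
  refine ⟨fun x => ∑ᶠ i, ρ i x • w i,
    locallyLipschitz_finsum (fun i => locallyLipschitz_smul (hρ i).1 (.const (w i)))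
      (ρ.locallyFinite.smul_left _),
    fun x => ρ.finsum_smul_mem_convex (g := fun i _ => w i) (mem_univ x) (fun i hi => ?_) (ht x)⟩
  exact interior_subset (s := {y | w i ∈ t y}) ((hρ i).2 hi)

end PartitionOfUnity

section IntegralCurves

open Function Metric Topology NNReal

variable {V : Type*} [NormedAddCommGroup V] [NormedSpace ℝ V] {W : V → V}

theorem eventuallyEq_of_isIntegralCurveAt (hW : LocallyLipschitz W) {γ δ : ℝ → V} {t₀ : ℝ}
    (hγ : IsIntegralCurveAt γ (fun _ => W) t₀) (hδ : IsIntegralCurveAt δ (fun _ => W) t₀)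
    (h : γ t₀ = δ t₀) : γ =ᶠ[𝓝 t₀] δ := by
  obtain ⟨K, u, hu, hlip⟩ := hW (γ t₀)
  exact ODE_solution_unique_of_eventually (v := fun _ => W) (s := fun _ => u)
    (.of_forall fun _ => hlip) (hγ.and (hγ.continuousAt.eventually hu))
    (hδ.and (hδ.continuousAt.eventually (h ▸ hu))) h

theorem eqOn_of_isIntegralCurveOn (hW : LocallyLipschitz W) {γ δ : ℝ → V} {s : Set ℝ}
    (hs : IsOpen s) (hconn : IsPreconnected s) {t₀ : ℝ} (ht₀ : t₀ ∈ s)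
    (hγ : IsIntegralCurveOn γ (fun _ => W) s) (hδ : IsIntegralCurveOn δ (fun _ => W) s)
    (h : γ t₀ = δ t₀) : EqOn γ δ s := by
  refine fun t ht => hconn.induction₂' (fun a b => γ a = δ a → γ b = δ b) (fun a ha => ?_)
    (fun _ _ _ _ _ _ hab hbc => hbc ∘ hab) ht₀ ht h
  rw [hs.nhdsWithin_eq ha]
  have hγa := hγ.isIntegralCurveAt (hs.mem_nhds ha)
  have hδa := hδ.isIntegralCurveAt (hs.mem_nhds ha)
  by_cases hab : γ a = δ a
  · filter_upwards [eventuallyEq_of_isIntegralCurveAt hW hγa hδa hab] with b hb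
    exact ⟨fun _ => hb, fun _ => hab⟩
  · filter_upwards [(hγa.continuousAt.ne_iff_eventually_ne hδa.continuousAt).mp hab] with b hb
    exact ⟨fun h => absurd h hab, fun h => absurd h hb⟩

theorem eq_of_isIntegralCurve (hW : LocallyLipschitz W) {γ δ : ℝ → V}
    (hγ : IsIntegralCurve γ fun _ => W) (hδ : IsIntegralCurve δ fun _ => W) {t₀ : ℝ}
    (h : γ t₀ = δ t₀) : γ = δ :=
  funext fun t => eqOn_of_isIntegralCurveOn hW isOpen_univ isPreconnected_univ (mem_univ t₀)
    (hγ.isIntegralCurveOn _) (hδ.isIntegralCurveOn _) h (mem_univ t)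

theorem exists_localFlow [CompleteSpace V] (hW : LocallyLipschitz W) (x₀ : V) :
    ∃ r > 0, ∃ ε > 0, ∃ α : V × ℝ → V,
      (∀ x ∈ closedBall x₀ r, α (x, 0) = x ∧
        IsIntegralCurveOn (fun t => α (x, t)) (fun _ => W) (Icc (-ε) ε)) ∧
      ContinuousOn α (closedBall x₀ r ×ˢ Icc (-ε) ε) := by
  obtain ⟨K, u, hu, hlip⟩ := hW x₀
  obtain ⟨a, ha, hau⟩ := nhds_basis_closedBall.mem_iff.mp hu
  lift a to ℝ≥0 using ha.le
  have hlip_ball : LipschitzOnWith K W (closedBall x₀ a) := hlip.mono hau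
  have hbound : ∀ x ∈ closedBall x₀ (a : ℝ), ‖W x‖ ≤ ‖W x₀‖₊ + K * a := fun x hx =>
    calc ‖W x‖ ≤ ‖W x₀‖ + ‖W x - W x₀‖ := norm_le_norm_add_norm_sub' _ _
      _ ≤ ‖W x₀‖ + K * a := by
        gcongr
        rw [← dist_eq_norm]
        exact (hlip_ball.dist_le_mul x hx x₀ (mem_closedBall_self ha.le)).trans
          (mul_le_mul_of_nonneg_left hx K.coe_nonneg)
  set L : ℝ≥0 := ‖W x₀‖₊ + K * a
  set ε : ℝ := a / (2 * (L + 1)) with hε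
  have hεpos : 0 < ε := by positivity
  have hLε : L * ε ≤ a - a / 2 := by
    rw [hε, mul_div_assoc', div_le_iff₀ (by positivity)]
    nlinarith
  have hpl : IsPicardLindelof (fun _ => W) (tmin := -ε) (tmax := ε)
      ⟨0, by simp [hεpos.le]⟩ x₀ a (a / 2) L K :=
    .of_time_independent (by exact_mod_cast hbound) hlip_ball (by simpa using hLε)
  obtain ⟨α, hα, hαcont⟩ := hpl.exists_forall_mem_closedBall_eq_hasDerivWithinAt_continuousOn
  exact ⟨(a / 2 : ℝ≥0), by simpa using ha, ε, hεpos, α, hα, hαcont⟩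

theorem exists_isIntegralCurveOn_sUnion (hW : LocallyLipschitz W) {𝒮 : Set (Set ℝ)} {t₀ : ℝ}
    {x : V} (hopen : ∀ s ∈ 𝒮, IsOpen s) (hconn : ∀ s ∈ 𝒮, IsPreconnected s)
    (hmem : ∀ s ∈ 𝒮, t₀ ∈ s)
    (hsol : ∀ s ∈ 𝒮, ∃ γ : ℝ → V, γ t₀ = x ∧ IsIntegralCurveOn γ (fun _ => W) s) :
    ∃ γ : ℝ → V, γ t₀ = x ∧ IsIntegralCurveOn γ (fun _ => W) (⋃₀ 𝒮) := by
  classical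
  choose! δ hδ₀ hδ using hsol
  let γ : ℝ → V := fun t => if h : ∃ s ∈ 𝒮, t ∈ s then δ h.choose t else x
  have hγ : ∀ s ∈ 𝒮, EqOn γ (δ s) s := fun s hs t ht => by
    have h : ∃ s ∈ 𝒮, t ∈ s := ⟨s, hs, ht⟩
    obtain ⟨hs', ht'⟩ := h.choose_spec
    rw [show γ t = δ h.choose t from dif_pos h]
    exact eqOn_of_isIntegralCurveOn hW ((hopen _ hs').inter (hopen s hs))
      ((hconn _ hs').ordConnected.inter (hconn s hs).ordConnected).isPreconnected
      ⟨hmem _ hs', hmem s hs⟩ ((hδ _ hs').mono inter_subset_left)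
      ((hδ s hs).mono inter_subset_right) ((hδ₀ _ hs').trans (hδ₀ s hs).symm) ⟨ht', ht⟩
  have hγ₀ : γ t₀ = x := by
    by_cases h : ∃ s ∈ 𝒮, t₀ ∈ s
    · exact (dif_pos h).trans (hδ₀ _ h.choose_spec.1)
    · exact dif_neg h
  refine ⟨γ, hγ₀, IsIntegralCurveAt.isIntegralCurveOn fun t ⟨s, hs, ht⟩ => ?_⟩
  filter_upwards [(hopen s hs).mem_nhds ht] with τ hτ
  have hderiv := (hδ s hs τ hτ).hasDerivAt ((hopen s hs).mem_nhds hτ)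
  rw [← hγ s hs hτ] at hderiv
  exact hderiv.congr_of_eventuallyEq ((hγ s hs).eventuallyEq_of_mem ((hopen s hs).mem_nhds hτ))

theorem exists_isIntegralCurveOn_union (hW : LocallyLipschitz W) {γ δ : ℝ → V} {s u : Set ℝ}
    (hs : IsOpen s) (hsconn : IsPreconnected s) (hu : IsOpen u) (huconn : IsPreconnected u)
    (hγ : IsIntegralCurveOn γ (fun _ => W) s) (hδ : IsIntegralCurveOn δ (fun _ => W) u)
    {t₁ : ℝ} (ht₁s : t₁ ∈ s) (ht₁u : t₁ ∈ u) (h : γ t₁ = δ t₁) :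
    ∃ γ' : ℝ → V, EqOn γ' γ s ∧ IsIntegralCurveOn γ' (fun _ => W) (s ∪ u) := by
  obtain ⟨γ', hγ'₁, hγ'⟩ := exists_isIntegralCurveOn_sUnion hW (𝒮 := {s, u}) (t₀ := t₁)
    (x := γ t₁) (by simp [hs, hu]) (by simp [hsconn, huconn]) (by simp [ht₁s, ht₁u]) (by
      rintro _ (rfl | rfl)
      exacts [⟨γ, rfl, hγ⟩, ⟨δ, h.symm, hδ⟩])
  rw [sUnion_pair] at hγ'
  exact ⟨γ', eqOn_of_isIntegralCurveOn hW hs hsconn ht₁s (hγ'.mono subset_union_left) hγ hγ'₁, hγ'⟩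

theorem lipschitzOnWith_of_isIntegralCurveOn {C : ℝ≥0} (hbound : ∀ x, ‖W x‖ ≤ C) {γ : ℝ → V}
    {s : Set ℝ} (hs : IsPreconnected s) (hγ : IsIntegralCurveOn γ (fun _ => W) s) :
    LipschitzOnWith C γ s :=
  (Real.convex_iff_isPreconnected.mpr hs).lipschitzOnWith_of_nnnorm_hasDerivWithin_le hγ
    fun t _ => hbound (γ t)

theorem exists_isIntegralCurveOn_union_mem_nhds [CompleteSpace V] (hW : LocallyLipschitz W)
    {C : ℝ≥0} (hbound : ∀ x, ‖W x‖ ≤ C) {γ : ℝ → V} {s : Set ℝ} (hs : IsOpen s)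
    (hconn : IsPreconnected s) (hγ : IsIntegralCurveOn γ (fun _ => W) s) {t₁ : ℝ}
    (ht₁ : t₁ ∈ closure s) :
    ∃ u, IsOpen u ∧ IsPreconnected (s ∪ u) ∧ t₁ ∈ u ∧
      ∃ γ' : ℝ → V, EqOn γ' γ s ∧ IsIntegralCurveOn γ' (fun _ => W) (s ∪ u) := by
  -- By the speed bound `γ` has a limit `y` at `t₁`, and the local flow around `y` lives for a time
  -- that is uniform over the starting points `γ τ` with `τ` close to `t₁`.
  obtain ⟨τ, hτs, hτ⟩ := mem_closure_iff_seq_limit.mp ht₁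
  obtain ⟨y, hy⟩ := cauchySeq_tendsto_of_complete
    ((lipschitzOnWith_of_isIntegralCurveOn hbound hconn hγ).cauchySeq_comp hτ.cauchySeq
      (range_subset_iff.mpr hτs))
  obtain ⟨r, hr, ε, hε, α, hα, -⟩ := exists_localFlow hW y
  obtain ⟨n, hny, hnt⟩ := ((hy.eventually (closedBall_mem_nhds y hr)).and
    (hτ.eventually (ball_mem_nhds t₁ hε))).exists
  obtain ⟨hα₀, hαcurve⟩ := hα _ hny
  have hδ : IsIntegralCurveOn (fun t => α (γ (τ n), t - τ n)) (fun _ => W) (ball (τ n) ε) := by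
    refine (hαcurve.comp_sub (τ n)).mono fun t ht => mem_vadd_set_iff_neg_vadd_mem.mpr ?_
    rw [mem_ball, Real.dist_eq, abs_lt] at ht
    rw [vadd_eq_add, neg_add_eq_sub]
    exact ⟨ht.1.le, ht.2.le⟩
  have hτu : τ n ∈ ball (τ n) ε := mem_ball_self hε
  have huconn : IsPreconnected (ball (τ n) ε) := (convex_ball _ _).isPreconnected
  exact ⟨_, isOpen_ball, hconn.union (τ n) (hτs n) hτu huconn, mem_ball_comm.mp hnt,
    exists_isIntegralCurveOn_union hW hs hconn isOpen_ball huconn hγ hδ (hτs n) hτu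
      (by simpa using hα₀.symm)⟩

theorem exists_isIntegralCurve_of_norm_le [CompleteSpace V] (hW : LocallyLipschitz W) {C : ℝ≥0}
    (hbound : ∀ x, ‖W x‖ ≤ C) (x : V) :
    ∃ γ : ℝ → V, γ 0 = x ∧ IsIntegralCurve γ fun _ => W := by
  let 𝒮 : Set (Set ℝ) := {s | IsOpen s ∧ IsPreconnected s ∧ 0 ∈ s ∧
    ∃ γ : ℝ → V, γ 0 = x ∧ IsIntegralCurveOn γ (fun _ => W) s}
  obtain ⟨γ, hγ₀, hγ⟩ := exists_isIntegralCurveOn_sUnion hW (𝒮 := 𝒮) (fun _ hs => hs.1)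
    (fun _ hs => hs.2.1) (fun _ hs => hs.2.2.1) (fun _ hs => hs.2.2.2)
  have hopen : IsOpen (⋃₀ 𝒮) := isOpen_sUnion fun _ hs => hs.1
  have hconn : IsPreconnected (⋃₀ 𝒮) :=
    isPreconnected_sUnion 0 𝒮 (fun _ hs => hs.2.2.1) fun _ hs => hs.2.1
  have hzero : (0 : ℝ) ∈ ⋃₀ 𝒮 := by
    obtain ⟨r, hr, ε, hε, α, hα, -⟩ := exists_localFlow hW x
    obtain ⟨hα₀, hαcurve⟩ := hα x (mem_closedBall_self hr.le)
    have hmem : (0 : ℝ) ∈ Ioo (-ε) ε := ⟨neg_lt_zero.mpr hε, hε⟩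
    exact ⟨_, ⟨isOpen_Ioo, isPreconnected_Ioo, hmem, _, hα₀, hαcurve.mono Ioo_subset_Icc_self⟩,
      hmem⟩
  have hclosed : IsClosed (⋃₀ 𝒮) := isClosed_of_closure_subset fun t₁ ht₁ => by
    obtain ⟨u, hu, huconn, ht₁u, γ', hγ'γ, hγ'⟩ :=
      exists_isIntegralCurveOn_union_mem_nhds hW hbound hopen hconn hγ ht₁
    exact ⟨_, ⟨hopen.union hu, huconn, .inl hzero, γ', (hγ'γ hzero).trans hγ₀, hγ'⟩, .inr ht₁u⟩
  rw [IsClopen.eq_univ ⟨hclosed, hopen⟩ ⟨0, hzero⟩, isIntegralCurveOn_univ] at hγ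
  exact ⟨γ, hγ₀, hγ⟩

theorem flow_add_of_isIntegralCurve (hW : LocallyLipschitz W) {σ : ℝ → V → V}
    (hσ₀ : ∀ x, σ 0 x = x) (hσ : ∀ x, IsIntegralCurve (σ · x) fun _ => W) (s t : ℝ) (x : V) :
    σ (s + t) x = σ s (σ t x) :=
  congrFun (eq_of_isIntegralCurve hW ((hσ x).comp_add t) (hσ (σ t x))
    (t₀ := 0) (by simp only [Function.comp_apply, zero_add, hσ₀])) s

theorem eventually_continuousAt_uncurry_of_isIntegralCurve [CompleteSpace V]
    (hW : LocallyLipschitz W) {σ : ℝ → V → V} (hσ₀ : ∀ x, σ 0 x = x)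
    (hσ : ∀ x, IsIntegralCurve (σ · x) fun _ => W) (y : V) :
    ∀ᶠ p in 𝓝 ((0 : ℝ), y), ContinuousAt (uncurry σ) p := by
  obtain ⟨r, hr, ε, hε, α, hα, hαcont⟩ := exists_localFlow hW y
  have hopen : IsOpen (Ioo (-ε) ε ×ˢ ball y r) := isOpen_Ioo.prod isOpen_ball
  have hσα : EqOn (uncurry σ) (α ∘ Prod.swap) (Ioo (-ε) ε ×ˢ ball y r) := by
    rintro ⟨t, x⟩ ⟨ht, hx⟩
    obtain ⟨hα₀, hαcurve⟩ := hα x (ball_subset_closedBall hx)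
    exact eqOn_of_isIntegralCurveOn hW isOpen_Ioo isPreconnected_Ioo (t₀ := 0)
      ⟨neg_lt_zero.mpr hε, hε⟩ ((hσ x).isIntegralCurveOn _)
      (hαcurve.mono Ioo_subset_Icc_self) ((hσ₀ x).trans hα₀.symm) ht
  have hcont : ContinuousOn (uncurry σ) (Ioo (-ε) ε ×ˢ ball y r) :=
    (hαcont.comp continuous_swap.continuousOn fun _ hp =>
      ⟨ball_subset_closedBall hp.2, Ioo_subset_Icc_self hp.1⟩).congr hσα
  filter_upwards [hopen.mem_nhds ⟨⟨neg_lt_zero.mpr hε, hε⟩, mem_ball_self hr⟩] with p hp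
  exact hcont.continuousAt (hopen.mem_nhds hp)

theorem continuous_uncurry_of_isIntegralCurve [CompleteSpace V] (hW : LocallyLipschitz W)
    {σ : ℝ → V → V} (hσ₀ : ∀ x, σ 0 x = x) (hσ : ∀ x, IsIntegralCurve (σ · x) fun _ => W) :
    Continuous (uncurry σ) := by
  -- Since `σ u = σ (u - s) ∘ σ s`, continuity at time `s` spreads to every time `u` close to `s`,
  -- over a distance that does not shrink as `s` varies near a given time.
  have hlocal := eventually_continuousAt_uncurry_of_isIntegralCurve hW hσ₀ hσ
  refine continuous_iff_continuousAt.mpr fun ⟨t₀, x⟩ => ?_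
  refine PreconnectedSpace.induction₂'
    (fun a b => ContinuousAt (uncurry σ) (a, x) → ContinuousAt (uncurry σ) (b, x))
    (fun a => ?_) ⟨fun _ _ _ hab hbc => hbc ∘ hab⟩ 0 t₀ (hlocal x).self_of_nhds
  have htransfer : ∀ᶠ p : ℝ × ℝ in 𝓝 (a, a),
      ContinuousAt (uncurry σ) (p.1, x) → ContinuousAt (uncurry σ) (p.2, x) := by
    have hshift : ContinuousAt (fun p : ℝ × ℝ => (p.2 - p.1, σ p.1 x)) (a, a) :=
      (continuous_snd.sub continuous_fst).continuousAt.prodMk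
        (((hσ x).continuous.comp continuous_fst).continuousAt)
    filter_upwards [hshift.eventually (by simpa using hlocal (σ a x))] with ⟨s, t⟩ hst hs
    have hfactor : uncurry σ = uncurry σ ∘ fun q : ℝ × V => (q.1 - s, σ s q.2) := by
      ext ⟨u, z⟩
      simp only [comp_apply, uncurry_apply_pair, ← flow_add_of_isIntegralCurve hW hσ₀ hσ,
        sub_add_cancel]
    have hslice : ContinuousAt (σ s) x := hs.comp (Continuous.prodMk_right s).continuousAt
    rw [hfactor]
    exact ContinuousAt.comp (x := (t, x)) hst
      ((continuous_fst.sub continuous_const).continuousAt.prodMk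
        (hslice.comp (x := (t, x)) continuous_snd.continuousAt))
  exact ((Continuous.prodMk_right a).continuousAt.eventually htransfer).and
    ((Continuous.prodMk_left a).continuousAt.eventually htransfer)

theorem exists_flow_of_norm_le [CompleteSpace V] (hW : LocallyLipschitz W) {C : ℝ≥0}
    (hbound : ∀ x, ‖W x‖ ≤ C) :
    ∃ φ : Flow ℝ V, ∀ x, IsIntegralCurve (φ · x) fun _ => W := by
  choose γ hγ₀ hγ using exists_isIntegralCurve_of_norm_le hW hbound
  exact ⟨{ toFun := fun t x => γ x t
           cont' := continuous_uncurry_of_isIntegralCurve hW hγ₀ hγ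
           map_add' := fun s t x => flow_add_of_isIntegralCurve hW hγ₀ hγ s t x
           map_zero' := hγ₀ }, hγ⟩

end IntegralCurves

section DescentRegion

open Metric

/-- A cone with base `E` opening below the level `c`: a point that lies `s ≤ δ ^ 2` below that level
may be at distance at most `s / δ` from `E`. A curve of speed at most `δ` that starts in `E` at
level `c` and along which `f` decreases at rate `δ ^ 2` stays in this region up to time one. -/
def descentRegion {X : Type*} [PseudoEMetricSpace X] (f : X → ℝ) (E : Set X) (c δ : ℝ) :
    Set X :=
  {x | c - δ ^ 2 ≤ f x ∧ f x ≤ c ∧ x ∈ cthickening ((c - f x) / δ) E}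

variable {X : Type*} [PseudoEMetricSpace X] {f : X → ℝ} {D E : Set X} {c δ : ℝ}

theorem isClosed_descentRegion (hf : Continuous f) : IsClosed (descentRegion f E c δ) := by
  simp only [descentRegion, mem_cthickening_iff]
  exact (isClosed_le continuous_const hf).inter <| (isClosed_le hf continuous_const).inter <|
    isClosed_le continuous_infEDist
      (ENNReal.continuous_ofReal.comp ((continuous_const.sub hf).div_const δ))

theorem disjoint_descentRegion (hE : IsClosed E) (hDE : Disjoint D E) (hD : ∀ x ∈ D, c ≤ f x) :
    Disjoint D (descentRegion f E c δ) := by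
  refine disjoint_left.mpr fun x hxD ⟨_, hxc, hxE⟩ => disjoint_left.mp hDE hxD ?_
  rwa [hxc.antisymm (hD x hxD), sub_self, zero_div, cthickening_zero, hE.closure_eq] at hxE

theorem descentRegion_subset_cthickening (hδ : 0 < δ) :
    descentRegion f E c δ ⊆ cthickening δ E := by
  rintro x ⟨hlow, -, hxE⟩
  refine cthickening_mono ?_ E hxE
  rw [div_le_iff₀ hδ]
  linarith

theorem abs_sub_le_of_mem_descentRegion (hδ : 0 < δ) (hδ₁ : δ ≤ 1) {x : X}
    (hx : x ∈ descentRegion f E c δ) : |f x - c| ≤ δ := by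
  obtain ⟨hlow, hup, -⟩ := hx
  rw [abs_le]
  constructor <;> nlinarith

end DescentRegion

section Descent

open Metric Topology NNReal

variable {V : Type*} [NormedAddCommGroup V] [NormedSpace ℝ V]

/-- The Palais–Smale condition at level `c` for a functional `f` with derivative `f'`: every
sequence along which `f` tends to `c` and `f'` tends to zero has a convergent subsequence. -/
def PalaisSmaleAt (f : V → ℝ) (f' : V → V →L[ℝ] ℝ) (c : ℝ) : Prop :=
  ∀ u : ℕ → V, Tendsto (fun n => f (u n)) atTop (𝓝 c) →
    Tendsto (fun n => ‖f' (u n)‖) atTop (𝓝 0) →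
    ∃ φ : ℕ → ℕ, StrictMono φ ∧ ∃ v : V, Tendsto (u ∘ φ) atTop (𝓝 v)

variable {f : V → ℝ} {f' : V → V →L[ℝ] ℝ} {D E : Set V} {c δ : ℝ} {W : V → V} {γ : ℝ → V}

theorem PalaisSmaleAt.eventually_lt_norm (hPS : PalaisSmaleAt f f' c) (hf : Continuous f)
    (hf' : Continuous f') (hE : IsClosed E) (hcrit : ∀ x ∈ E, f x = c → f' x ≠ 0) :
    ∀ᶠ δ in 𝓝[>] (0 : ℝ), ∀ x ∈ cthickening δ E, |f x - c| ≤ δ → δ < ‖f' x‖ := by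
  by_contra hfreq
  obtain ⟨δ, hδ, hbad⟩ := exists_seq_forall_of_frequently (not_eventually.mp hfreq)
  push Not at hbad
  choose x hxE hxc hxf' using hbad
  replace hδ : Tendsto δ atTop (𝓝 0) := hδ.mono_right nhdsWithin_le_nhds
  have hfx : Tendsto (fun n => f (x n)) atTop (𝓝 c) :=
    tendsto_iff_norm_sub_tendsto_zero.mpr (squeeze_zero (fun _ => norm_nonneg _) hxc hδ)
  obtain ⟨φ, hφ, v, hv⟩ := hPS x hfx (squeeze_zero (fun _ => norm_nonneg _) hxf' hδ)
  have hvE : infEDist v E ≤ ENNReal.ofReal 0 :=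
    le_of_tendsto_of_tendsto' ((continuous_infEDist.tendsto v).comp hv)
      ((ENNReal.continuous_ofReal.tendsto 0).comp (hδ.comp hφ.tendsto_atTop))
      fun n => mem_cthickening_iff.mp (hxE (φ n))
  rw [← mem_cthickening_iff, cthickening_zero, hE.closure_eq] at hvE
  have hfv : f v = c :=
    tendsto_nhds_unique ((hf.tendsto v).comp hv) (hfx.comp hφ.tendsto_atTop)
  have hf'v : ‖f' v‖ ≤ 0 :=
    le_of_tendsto_of_tendsto' ((hf'.norm.tendsto v).comp hv) (hδ.comp hφ.tendsto_atTop)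
      fun n => hxf' (φ n)
  exact hcrit v hvE hfv (norm_le_zero_iff.mp hf'v)

theorem exists_norm_le_apply_lt {l : V →L[ℝ] ℝ} {κ M : ℝ} (hκ : κ < ‖l‖) (hM : 0 < M) :
    ∃ w : V, ‖w‖ ≤ M ∧ l w < -(κ * M) := by
  obtain ⟨u, hu, hlu⟩ := l.exists_lt_apply_of_lt_opNorm hκ
  have hnorm : ∀ v : V, ‖v‖ = ‖u‖ → ‖M • v‖ ≤ M := fun v hv => by
    rw [norm_smul, Real.norm_of_nonneg hM.le, hv]
    exact mul_le_of_le_one_right hM.le hu.le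
  rcases lt_abs.mp hlu with hpos | hneg
  · refine ⟨M • -u, hnorm _ (norm_neg u), ?_⟩
    rw [map_smul, map_neg, smul_eq_mul]
    nlinarith
  · refine ⟨M • u, hnorm u rfl, ?_⟩
    rw [map_smul, smul_eq_mul]
    nlinarith

theorem exists_locallyLipschitz_descentField {C : Set V} {κ M : ℝ} (hf' : Continuous f')
    (hD : IsClosed D) (hC : IsClosed C) (hDC : Disjoint D C) (hκ₀ : 0 ≤ κ)
    (hκ : ∀ x ∈ C, κ < ‖f' x‖) (hM : 0 < M) :
    ∃ W : V → V, LocallyLipschitz W ∧ (∀ x, ‖W x‖ ≤ M) ∧ (∀ x, f' x (W x) ≤ 0) ∧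
      (∀ x ∈ D, W x = 0) ∧ ∀ x ∈ C, f' x (W x) < -(κ * M) := by
  let t : V → Set V := fun x => {w | ‖w‖ ≤ M ∧ f' x w ≤ 0 ∧ (x ∈ D → w = 0) ∧
    (x ∈ C → f' x w < -(κ * M))}
  have hconvex : ∀ x, Convex ℝ (t x) := fun x => by
    have ht : t x = closedBall 0 M ∩ ({w | f' x w ≤ 0} ∩
        ((⋂ _ : x ∈ D, {0}) ∩ ⋂ _ : x ∈ C, {w | f' x w < -(κ * M)})) := by
      ext w
      simp [t]
    rw [ht]
    exact (convex_closedBall 0 M).inter <| (convex_halfSpace_le (f' x).isLinear 0).inter <|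
      (convex_iInter fun _ => convex_singleton 0).inter <|
        convex_iInter fun _ => convex_halfSpace_lt (f' x).isLinear _
  have hlocal : ∀ x, ∃ w, ∀ᶠ y in 𝓝 x, w ∈ t y := fun x => by
    by_cases hx : x ∈ C
    · obtain ⟨w, hwM, hw⟩ := exists_norm_le_apply_lt (hκ x hx) hM
      refine ⟨w, ?_⟩
      filter_upwards [hD.isOpen_compl.mem_nhds (disjoint_right.mp hDC hx),
        (hf'.clm_apply continuous_const).continuousAt.eventually_lt_const hw] with y hyD hyw
      exact ⟨hwM, hyw.le.trans (neg_nonpos.mpr (by positivity)), fun h => absurd h hyD,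
        fun _ => hyw⟩
    · refine ⟨0, ?_⟩
      filter_upwards [hC.isOpen_compl.mem_nhds hx] with y hy
      exact ⟨by simpa using hM.le, (map_zero (f' y)).le, fun _ => rfl, fun h => absurd h hy⟩
  obtain ⟨W, hW, hWt⟩ := exists_locallyLipschitz_forall_mem_convex hconvex hlocal
  exact ⟨W, hW, fun x => (hWt x).1, fun x => (hWt x).2.1, fun x => (hWt x).2.2.1,
    fun x => (hWt x).2.2.2⟩

theorem hasDerivAt_comp_isIntegralCurve (hf : ∀ x, HasFDerivAt f (f' x) x)
    (hγ : IsIntegralCurve γ fun _ => W) (t : ℝ) :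
    HasDerivAt (fun s => f (γ s)) (f' (γ t) (W (γ t))) t :=
  (hf (γ t)).comp_hasDerivAt t (hγ t)

theorem antitone_comp_isIntegralCurve (hf : ∀ x, HasFDerivAt f (f' x) x)
    (hdesc : ∀ x, f' x (W x) ≤ 0) (hγ : IsIntegralCurve γ fun _ => W) :
    Antitone fun t => f (γ t) :=
  antitone_of_hasDerivAt_nonpos (hasDerivAt_comp_isIntegralCurve hf hγ) fun _ => hdesc _

theorem dist_isIntegralCurve_le {C : ℝ≥0} (hbound : ∀ x, ‖W x‖ ≤ C)
    (hγ : IsIntegralCurve γ fun _ => W) (s t : ℝ) : dist (γ s) (γ t) ≤ C * dist s t :=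
  (lipschitzOnWith_of_isIntegralCurveOn hbound isPreconnected_univ
    (hγ.isIntegralCurveOn univ)).dist_le_mul s (mem_univ s) t (mem_univ t)

theorem apply_isIntegralCurve_one_le (hf : ∀ x, HasFDerivAt f (f' x) x) (hδ : 0 < δ)
    (hbound : ∀ x, ‖W x‖ ≤ δ) (hdesc : ∀ x ∈ descentRegion f E c δ, f' x (W x) < -δ ^ 2)
    (hγ : IsIntegralCurve γ fun _ => W) (hγE : γ 0 ∈ E) (hγc : f (γ 0) ≤ c) :
    f (γ 1) ≤ c - δ ^ 2 := by
  have hderiv := hasDerivAt_comp_isIntegralCurve hf hγ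
  have hB : ∀ t, HasDerivAt (fun t : ℝ => c - δ ^ 2 * t) (-δ ^ 2) t := fun t => by
    simpa using ((hasDerivAt_id t).const_mul (δ ^ 2)).const_sub c
  have hcone : ∀ t ∈ Ico (0 : ℝ) 1, f (γ t) = c - δ ^ 2 * t → γ t ∈ descentRegion f E c δ := by
    intro t ht heq
    have hdist : dist (γ t) (γ 0) ≤ (c - f (γ t)) / δ := by
      lift δ to ℝ≥0 using hδ.le
      calc dist (γ t) (γ 0) ≤ δ * dist t 0 := dist_isIntegralCurve_le hbound hγ t 0
        _ = (c - f (γ t)) / δ := by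
          rw [heq, Real.dist_0_eq_abs, abs_of_nonneg ht.1]
          field_simp
          ring
    refine ⟨?_, ?_, mem_cthickening_of_dist_le _ _ _ _ hγE hdist⟩
    · nlinarith [sq_nonneg δ, ht.2]
    · nlinarith [sq_nonneg δ, ht.1]
  simpa using image_le_of_deriv_right_lt_deriv_boundary' (f := fun t => f (γ t))
    (B := fun t => c - δ ^ 2 * t)
    (fun t _ => (hderiv t).continuousAt.continuousWithinAt)
    (fun t _ => (hderiv t).hasDerivWithinAt) (by simpa using hγc)
    (fun t _ => (hB t).continuousAt.continuousWithinAt) (fun t _ => (hB t).hasDerivWithinAt)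
    (fun t ht heq => hdesc _ (hcone t ht heq)) (right_mem_Icc.mpr zero_le_one)

end Descent

/-- **Deformation lemma.** Let `V` be a real Banach space, `D, E` closed subsets,
`c ∈ ℝ`, and `f : V → ℝ` a `C¹` functional (derivative `f'`) satisfying the local
Palais–Smale condition at level `c`. If `D ∩ E = ∅`, `E` contains no critical
point of level `c`, `f ≤ c` on `E` and `f ≥ c` on `D`, then there exist `ε > 0`
and a continuous `η : ℝ × V → V` such that each `η (t, ·)` is a homeomorphism
with inverse `η (-t, ·)`, `f (η (t, x)) ≤ f x` for `t ≥ 0`, `η (t, ·)` fixes `D`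
for all `t`, and `f (η (1, x)) ≤ c - ε` on `E`. -/
theorem deformation_lemma
    {V : Type*} [NormedAddCommGroup V] [NormedSpace ℝ V] [CompleteSpace V]
    (f : V → ℝ) (f' : V → (V →L[ℝ] ℝ))
    (hderiv : ∀ x, HasFDerivAt f (f' x) x) (hcont : Continuous f')
    (D E : Set V) (hD : IsClosed D) (hE : IsClosed E) (c : ℝ)
    -- local Palais–Smale condition at level `c`
    (hPS : ∀ u : ℕ → V,
      Tendsto (fun n => f (u n)) atTop (nhds c) →
      Tendsto (fun n => ‖f' (u n)‖) atTop (nhds 0) →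
      ∃ φ : ℕ → ℕ, StrictMono φ ∧ ∃ v : V, Tendsto (u ∘ φ) atTop (nhds v))
    -- (L1)
    (hDE : D ∩ E = ∅)
    (hEK : E ∩ {v : V | f' v = 0 ∧ f v = c} = ∅)
    -- (L2)
    (hfE : ∀ x ∈ E, f x ≤ c) (hfD : ∀ x ∈ D, c ≤ f x) :
    ∃ ε : ℝ, 0 < ε ∧ ∃ η : ℝ × V → V, Continuous η ∧
      -- (i) each `η (t, ·)` is a homeomorphism with inverse `η (-t, ·)`
      (∀ t : ℝ, ∃ h : V ≃ₜ V, (∀ x, h x = η (t, x)) ∧ (∀ x, h.symm x = η (-t, x))) ∧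
      -- (ii)
      (∀ t : ℝ, 0 ≤ t → ∀ x : V, f (η (t, x)) ≤ f x) ∧
      -- (iii)
      (∀ t : ℝ, ∀ x ∈ D, η (t, x) = x) ∧
      -- (iv)
      (∀ x ∈ E, f (η (1, x)) ≤ c - ε) := by
  have hf : Continuous f := continuous_iff_continuousAt.mpr fun x => (hderiv x).continuousAt
  have hcrit : ∀ x ∈ E, f x = c → f' x ≠ 0 := fun x hx hfx h0 => hEK.subset ⟨hx, h0, hfx⟩
  obtain ⟨δ, hgrad, hδ, hδ₁⟩ := ((PalaisSmaleAt.eventually_lt_norm hPS hf hcont hE hcrit).and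
    (Ioc_mem_nhdsGT zero_lt_one)).exists
  obtain ⟨W, hW, hWδ, hdesc, hWD, hWC⟩ := exists_locallyLipschitz_descentField hcont hD
    (isClosed_descentRegion hf)
    (disjoint_descentRegion hE (disjoint_iff_inter_eq_empty.mpr hDE) hfD) hδ.le
    (fun x hx => hgrad x (descentRegion_subset_cthickening hδ hx)
      (abs_sub_le_of_mem_descentRegion hδ hδ₁ hx)) hδ
  obtain ⟨φ, hφ⟩ := exists_flow_of_norm_le hW (C := ⟨δ, hδ.le⟩) hWδ
  refine ⟨δ ^ 2, by positivity, fun p => φ p.1 p.2, φ.cont', fun t => ⟨φ.toHomeomorph t,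
    fun _ => rfl, fun _ => rfl⟩, fun t ht x => ?_, fun t x hx => ?_, fun x hx => ?_⟩
  · simpa using antitone_comp_isIntegralCurve hderiv hdesc (hφ x) ht
  · exact congrFun (eq_of_isIntegralCurve hW (hφ x) (isIntegralCurve_const fun _ => hWD x hx)
      (φ.map_zero_apply x)) t
  · refine apply_isIntegralCurve_one_le (E := E) hderiv hδ hWδ (fun y hy => ?_) (hφ x) ?_ ?_
    · simpa [sq] using hWC y hy
    · simpa using hx
    · simpa using hfE x hx
end

section
/- Let X be a real Banach space, K a compact metric space, K₀ ⊆ K a closed subset, μ : K₀ → X continuous, and let E = {m ∈ C(K, X) : m|_{K₀} = μ}, a complete metric space under the uniform distance. Let f : X → ℝ be a C¹ functional, set c = inf_{m ∈ E} max_{s ∈ K} f(m(s)) and d = max_{s ∈ K₀} f(μ(s)), and suppose c > d. Then for every ε ∈ (0, c − d) and every p ∈ E such that max_{s ∈ K} f(p(s)) ≤ c + ε, there exists u ∈ X such that c − ε ≤ f(u) ≤ max_{s ∈ K} f(p(s)), dist(u, p(K)) ≤ √ε, and ‖f'(u)‖ ≤ √ε. -/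
open Set Filter

/-!
Ekeland's variational principle, applied with slope `k = √ε` on the complete space of admissible
maps, replaces `p` by a nearby map `q` that no admissible `m` improves by more than `k * dist m q`.
Suppose `‖f'‖ > k` at every maximum of `f` on `q(K)`. A partition of unity on `X` glues a continuous
field `v` of vectors of norm at most `1` with `f' x (v x) < -k` at these maxima and `v = 0` where
`f ≤ d`; since `q` and `q + t • v ∘ q` agree on `K₀`, the perturbed map is admissible. Strict
differentiability of `f` and compactness of `K` show that for small `t > 0` it lowers the maximum by
more than `k * t`, a contradiction. Taking `v` on `X` rather than on `K` dispenses with separation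
axioms on `K`.
-/

open scoped Topology

section Ekeland

/-- The lower set of `x` in the Ekeland (Bishop–Phelps) order attached to `F` with slope `k`:
the points that improve `F x` by at least `k` times their distance to `x`. -/
def ekelandSet {E : Type*} [PseudoMetricSpace E] (F : E → ℝ) (k : ℝ) (x : E) : Set E :=
  {y | F y + k * dist y x ≤ F x}

section PseudoMetricSpace

variable {E : Type*} [PseudoMetricSpace E] {F : E → ℝ} {k : ℝ} {x y : E}

theorem self_mem_ekelandSet : x ∈ ekelandSet F k x := by
  simp [ekelandSet]

theorem ekelandSet_subset_of_mem (hk : 0 ≤ k) (hy : y ∈ ekelandSet F k x) :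
    ekelandSet F k y ⊆ ekelandSet F k x := by
  intro z hz
  have htriangle := mul_le_mul_of_nonneg_left (dist_triangle z y x) hk
  calc F z + k * dist z x ≤ F z + k * dist z y + k * dist y x := by linarith
    _ ≤ F y + k * dist y x := by gcongr; exact hz
    _ ≤ F x := hy

theorem isClosed_ekelandSet (hF : LowerSemicontinuous F) (x : E) :
    IsClosed (ekelandSet F k x) := by
  have hdist : Continuous fun y ↦ k * dist y x := by fun_prop
  exact (hF.add hdist.lowerSemicontinuous).isClosed_preimage (F x)

theorem exists_mem_ekelandSet_forall_dist_le (hk : 0 < k) (hF : BddBelow (range F)) (x : E)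
    {δ : ℝ} (hδ : 0 < δ) :
    ∃ y ∈ ekelandSet F k x, ∀ z ∈ ekelandSet F k y, dist z y ≤ δ := by
  obtain ⟨_, ⟨y, hy, rfl⟩, hlt⟩ :=
    Real.lt_sInf_add_pos (⟨F x, mem_image_of_mem F self_mem_ekelandSet⟩ :
      (F '' ekelandSet F k x).Nonempty) (mul_pos hk hδ)
  refine ⟨y, hy, fun z hz ↦ le_of_mul_le_mul_left ?_ hk⟩
  have hinf : sInf (F '' ekelandSet F k x) ≤ F z :=
    csInf_le (hF.mono (image_subset_range _ _))
      (mem_image_of_mem F (ekelandSet_subset_of_mem hk.le hy hz))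
  have hdrop : F z + k * dist z y ≤ F y := hz
  linarith

end PseudoMetricSpace

theorem ekeland_variational_principle {E : Type*} [MetricSpace E] [CompleteSpace E] {F : E → ℝ}
    {k : ℝ} (hF : LowerSemicontinuous F) (hbdd : BddBelow (range F)) (hk : 0 < k) (p : E) :
    ∃ q, F q + k * dist q p ≤ F p ∧ ∀ m, m ≠ q → F q < F m + k * dist m q := by
  choose next next_mem dist_le using fun (n : ℕ) (x : E) ↦
    exists_mem_ekelandSet_forall_dist_le hk hbdd x (Nat.one_div_pos_of_nat (α := ℝ) (n := n))
  let x : ℕ → E := fun n ↦ Nat.rec p next n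
  have hanti : Antitone fun n ↦ ekelandSet F k (x n) :=
    antitone_nat_of_succ_le fun n ↦ ekelandSet_subset_of_mem hk.le (next_mem n (x n))
  have hlim0 := tendsto_one_div_add_atTop_nhds_zero_nat (𝕜 := ℝ)
  have hcauchy : CauchySeq fun n ↦ x (n + 1) := by
    refine cauchySeq_of_le_tendsto_0' _ (fun n m hnm ↦ ?_) hlim0
    rw [dist_comm]
    exact dist_le n (x n) _ (hanti (Nat.succ_le_succ hnm) self_mem_ekelandSet)
  obtain ⟨q, hq⟩ := cauchySeq_tendsto_of_complete hcauchy
  have hq_mem (n : ℕ) : q ∈ ekelandSet F k (x n) := by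
    refine (isClosed_ekelandSet hF (x n)).mem_of_tendsto hq ?_
    filter_upwards [eventually_ge_atTop n] with m hnm
    exact hanti (Nat.le_succ_of_le hnm) self_mem_ekelandSet
  refine ⟨q, hq_mem 0, fun m hne ↦ not_le.1 fun hm ↦ hne ?_⟩
  have hm_lim : Tendsto (fun n ↦ x (n + 1)) atTop (𝓝 m) := by
    refine tendsto_iff_dist_tendsto_zero.2 (squeeze_zero (fun _ ↦ dist_nonneg) (fun n ↦ ?_) hlim0)
    rw [dist_comm]
    exact dist_le n (x n) m (ekelandSet_subset_of_mem hk.le (hq_mem (n + 1)) hm)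
  exact tendsto_nhds_unique hm_lim hq

end Ekeland

section MaximaAlongMaps

/-- The paper's space `E` of continuous maps `K → X` with prescribed values `μ` on `K₀`. -/
def admissibleMaps {K X : Type*} [TopologicalSpace K] [TopologicalSpace X] (K₀ : Set K)
    (μ : K₀ → X) : Set C(K, X) :=
  {m | ∀ s : K₀, m s = μ s}

theorem isClosed_admissibleMaps {K X : Type*} [TopologicalSpace K] [TopologicalSpace X]
    [T2Space X] (K₀ : Set K) (μ : K₀ → X) : IsClosed (admissibleMaps K₀ μ) := by
  simp only [admissibleMaps, ofPred_forall]
  exact isClosed_iInter fun s ↦ isClosed_eq (continuous_eval_const _) continuous_const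

variable {X : Type*} [TopologicalSpace X] {K : Type*} [TopologicalSpace K] [CompactSpace K]
  {f : X → ℝ}

theorem bddAbove_range_apply_continuousMap (hf : Continuous f) (m : C(K, X)) :
    BddAbove (range fun s ↦ f (m s)) :=
  (isCompact_range (hf.comp m.continuous)).bddAbove

theorem bddBelow_iSup_image_admissibleMaps (hf : Continuous f) {K₀ : Set K} (hK₀ : K₀.Nonempty)
    (μ : K₀ → X) : BddBelow ((fun m : C(K, X) ↦ ⨆ s, f (m s)) '' admissibleMaps K₀ μ) := by
  obtain ⟨s₀, hs₀⟩ := hK₀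
  refine ⟨f (μ ⟨s₀, hs₀⟩), forall_mem_image.2 fun m hm ↦ ?_⟩
  rw [← hm]
  exact le_ciSup (bddAbove_range_apply_continuousMap hf m) s₀

theorem lowerSemicontinuous_iSup_apply_continuousMap (hf : Continuous f) :
    LowerSemicontinuous fun m : C(K, X) ↦ ⨆ s, f (m s) :=
  lowerSemicontinuous_ciSup (bddAbove_range_apply_continuousMap hf) fun s ↦
    (hf.comp (continuous_eval_const s)).lowerSemicontinuous

theorem exists_ekeland_minimizer_iSup {X : Type*} [MetricSpace X] [CompleteSpace X] {f : X → ℝ}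
    (hf : Continuous f) {E : Set C(K, X)} (hE : IsClosed E)
    (hbdd : BddBelow ((fun m : C(K, X) ↦ ⨆ s, f (m s)) '' E)) {k : ℝ} (hk : 0 < k)
    {p : C(K, X)} (hp : p ∈ E) :
    ∃ q ∈ E, (⨆ s, f (q s)) + k * dist q p ≤ ⨆ s, f (p s) ∧
      ∀ m ∈ E, ⨆ s, f (q s) ≤ (⨆ s, f (m s)) + k * dist m q := by
  have : CompleteSpace E := hE.completeSpace_coe
  obtain ⟨⟨q, hqE⟩, hqp, hq⟩ := ekeland_variational_principle
    ((lowerSemicontinuous_iSup_apply_continuousMap hf).comp continuous_subtype_val)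
    (by rwa [range_comp, Subtype.range_coe]) hk (⟨p, hp⟩ : E)
  refine ⟨q, hqE, hqp, fun m hm ↦ ?_⟩
  rcases eq_or_ne m q with rfl | hne
  · simp
  · exact (hq ⟨m, hm⟩ (by simpa using hne)).le

end MaximaAlongMaps

section Descent

variable {X : Type*} [NormedAddCommGroup X] [NormedSpace ℝ X]

theorem exists_norm_le_one_apply_lt_neg {φ : X →L[ℝ] ℝ} {k : ℝ} (hφ : k < ‖φ‖) :
    ∃ v : X, ‖v‖ ≤ 1 ∧ φ v < -k := by
  obtain ⟨v, hv, hφv⟩ := φ.exists_lt_apply_of_lt_opNorm hφ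
  rcases lt_abs.1 hφv with hpos | hneg
  · exact ⟨-v, by simpa using hv.le, by simpa using hpos⟩
  · exact ⟨v, hv.le, lt_neg_of_lt_neg hneg⟩

theorem exists_continuousMap_apply_lt_neg {Y : Type*} [TopologicalSpace Y] [NormalSpace Y]
    [ParacompactSpace Y] {φ : Y → X →L[ℝ] ℝ} (hφ : Continuous φ) {S T : Set Y}
    (hS : IsClosed S) (hT : IsClosed T) (hST : Disjoint S T) {k : ℝ} (hk : ∀ y ∈ S, k < ‖φ y‖) :
    ∃ v : C(Y, X), (∀ y, ‖v y‖ ≤ 1) ∧ (∀ y ∈ T, v y = 0) ∧ ∀ y ∈ S, φ y (v y) < -k := by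
  let t : Y → Set X := fun y ↦
    Metric.closedBall 0 1 ∩ ({v | y ∈ T → v = 0} ∩ {v | y ∈ S → φ y v < -k})
  have ht (y : Y) : Convex ℝ (t y) := by
    refine (convex_closedBall 0 1).inter (Convex.inter ?_ ?_)
    · by_cases hy : y ∈ T <;> simp [hy, convex_univ]
    · by_cases hy : y ∈ S
      · simpa [hy] using convex_halfSpace_lt (φ y).toLinearMap.isLinear (-k)
      · simp [hy, convex_univ]
  have hlocal (y : Y) : ∃ v, ∀ᶠ z in 𝓝 y, v ∈ t z := by
    by_cases hy : y ∈ S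
    · obtain ⟨v, hv, hφv⟩ := exists_norm_le_one_apply_lt_neg (hk y hy)
      have hφv_near : ∀ᶠ z in 𝓝 y, φ z v < -k :=
        (isOpen_lt (hφ.clm_apply continuous_const) continuous_const).mem_nhds hφv
      refine ⟨v, ?_⟩
      filter_upwards [hT.isOpen_compl.mem_nhds (hST.notMem_of_mem_left hy), hφv_near]
        with z hzT hzv
      exact ⟨mem_closedBall_zero_iff.2 hv, fun h ↦ absurd h hzT, fun _ ↦ hzv⟩
    · refine ⟨0, ?_⟩
      filter_upwards [hS.isOpen_compl.mem_nhds hy] with z hz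
      exact ⟨by simp, fun _ ↦ rfl, fun h ↦ absurd h hz⟩
  obtain ⟨v, hv⟩ := exists_continuous_forall_mem_convex_of_local_const ht hlocal
  exact ⟨v, fun y ↦ mem_closedBall_zero_iff.1 (hv y).1, fun y ↦ (hv y).2.1, fun y ↦ (hv y).2.2⟩

theorem eventually_apply_add_smul_lt {f : X → ℝ} {φ : X →L[ℝ] ℝ} {a w : X} {r : ℝ}
    (hf : HasStrictFDerivAt f φ a) (hr : φ w < r) :
    ∀ᶠ z : ℝ × X × X in 𝓝 (0, a, w), 0 < z.1 → f (z.2.1 + z.1 • z.2.2) < f z.2.1 + z.1 * r := by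
  obtain ⟨η, hη, hηr⟩ : ∃ η > 0, φ w < r - η * (‖w‖ + 1) := by
    refine ⟨(r - φ w) / (2 * (‖w‖ + 1)), div_pos (sub_pos.2 hr) (by positivity), ?_⟩
    field_simp
    linarith
  have hpair : Tendsto (fun z : ℝ × X × X ↦ (z.2.1 + z.1 • z.2.2, z.2.1)) (𝓝 (0, a, w))
      (𝓝 (a, a)) := by
    have : Continuous fun z : ℝ × X × X ↦ (z.2.1 + z.1 • z.2.2, z.2.1) := by fun_prop
    simpa using this.tendsto (0, a, w)
  have hφ_near : ∀ᶠ z : ℝ × X × X in 𝓝 (0, a, w), φ z.2.2 < r - η * (‖w‖ + 1) :=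
    (isOpen_lt (by fun_prop) continuous_const).mem_nhds hηr
  have hnorm_near : ∀ᶠ z : ℝ × X × X in 𝓝 (0, a, w), ‖z.2.2‖ < ‖w‖ + 1 :=
    (isOpen_lt (by fun_prop) continuous_const).mem_nhds (lt_add_one ‖w‖)
  filter_upwards [hpair.eventually (hf.isLittleO.def hη), hφ_near, hnorm_near]
    with ⟨t, x, u⟩ hlittle hφu hnorm ht
  have hremainder : f (x + t • u) - f x - t * φ u ≤ t * (η * ‖u‖) := by
    have := (le_abs_self _).trans hlittle
    simp only [add_sub_cancel_left, map_smul, smul_eq_mul, norm_smul, Real.norm_of_nonneg ht.le]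
      at this
    linarith
  calc f (x + t • u) ≤ f x + t * (φ u + η * ‖u‖) := by linarith
    _ < f x + t * r := by
      gcongr
      have : η * ‖u‖ ≤ η * (‖w‖ + 1) := by gcongr
      linarith

end Descent

section Minimax

variable {X : Type*} [NormedAddCommGroup X] [NormedSpace ℝ X]
  {K : Type*} [TopologicalSpace K] [CompactSpace K]
  {f : X → ℝ} {f' : X → X →L[ℝ] ℝ}

theorem exists_maximizer_le_apply_of_frequently [Nonempty K]
    (hf : ∀ x, HasStrictFDerivAt f (f' x) x) (q w : C(K, X)) {r : ℝ}
    (hr : ∃ᶠ t in 𝓝[>] (0 : ℝ), (⨆ s, f (q s)) + t * r ≤ ⨆ s, f (q s + t • w s)) :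
    ∃ s, f (q s) = ⨆ s, f (q s) ∧ r ≤ f' (q s) (w s) := by
  have hfc : Continuous f := continuous_iff_continuousAt.2 fun x ↦ (hf x).continuousAt
  have hle (s : K) : f (q s) ≤ ⨆ s, f (q s) :=
    le_ciSup (bddAbove_range_apply_continuousMap hfc q) s
  by_contra! hlt
  refine hr ?_
  have hlocal (s : K) : ∀ᶠ z : ℝ × K in 𝓝 (0, s),
      0 < z.1 → f (q z.2 + z.1 • w z.2) < (⨆ s, f (q s)) + z.1 * r := by
    rcases (hle s).lt_or_eq with hs | hs
    · have h₁ : ContinuousAt (fun z : ℝ × K ↦ f (q z.2 + z.1 • w z.2)) (0, s) := by fun_prop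
      have h₂ : ContinuousAt (fun z : ℝ × K ↦ (⨆ s, f (q s)) + z.1 * r) (0, s) := by fun_prop
      exact (h₁.eventually_lt h₂ (by simpa using hs)).mono fun _ hz _ ↦ hz
    · have hcont : Continuous fun z : ℝ × K ↦ (z.1, q z.2, w z.2) := by fun_prop
      filter_upwards [(hcont.tendsto (0, s)).eventually
        (eventually_apply_add_smul_lt (hf (q s)) (hlt s hs))] with z hz hpos
      exact (hz hpos).trans_le (by gcongr; exact hle z.2)
  have huniform : ∀ᶠ t in 𝓝 (0 : ℝ), ∀ s ∈ univ,
      0 < t → f (q s + t • w s) < (⨆ s, f (q s)) + t * r :=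
    isCompact_univ.eventually_forall_of_forall_eventually fun s _ ↦ hlocal s
  filter_upwards [huniform.filter_mono nhdsWithin_le_nhds, self_mem_nhdsWithin] with t ht hpos
  obtain ⟨s, hs⟩ := (isCompact_range (hfc.comp (q + t • w).continuous)).sSup_mem (range_nonempty _)
  exact not_le.2 (hs.symm.trans_lt (ht s (mem_univ s) hpos))

theorem exists_maximizer_norm_fderiv_le [Nonempty K] (hf : ∀ x, HasFDerivAt f (f' x) x)
    (hf' : Continuous f') {q : C(K, X)} {K₀ : Set K} {d k : ℝ} (hk : 0 ≤ k)
    (hd : ∀ s ∈ K₀, f (q s) ≤ d) (hdq : d < ⨆ s, f (q s))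
    (hq : ∀ m : C(K, X), EqOn m q K₀ → ⨆ s, f (q s) ≤ (⨆ s, f (m s)) + k * dist m q) :
    ∃ s, f (q s) = ⨆ s, f (q s) ∧ ‖f' (q s)‖ ≤ k := by
  have hfc : Continuous f := continuous_iff_continuousAt.2 fun x ↦ (hf x).continuousAt
  by_contra! hlarge
  obtain ⟨v, hv_norm, hv_zero, hv_descent⟩ := exists_continuousMap_apply_lt_neg hf'
    (S := range q ∩ {x | f x = ⨆ s, f (q s)}) (T := {x | f x ≤ d}) (k := k)
    ((isCompact_range q.continuous).isClosed.inter (isClosed_eq hfc continuous_const))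
    (isClosed_le hfc continuous_const)
    (disjoint_left.2 fun x hxS hxT ↦ (hdq.trans_eq hxS.2.symm).not_ge hxT)
    (by rintro _ ⟨⟨s, rfl⟩, hs⟩; exact hlarge s hs)
  have hperturb (t : ℝ) (ht : 0 < t) :
      (⨆ s, f (q s)) + t * -k ≤ ⨆ s, f (q s + t • (v.comp q) s) := by
    have heq : EqOn (q + t • v.comp q) q K₀ := fun s hs ↦ by simp [hv_zero (q s) (hd s hs)]
    have hdist : dist (q + t • v.comp q) q ≤ t := by
      refine (ContinuousMap.dist_le ht.le).2 fun s ↦ ?_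
      simpa [norm_smul, abs_of_pos ht] using mul_le_of_le_one_right ht.le (hv_norm (q s))
    have hle := hq _ heq
    simp only [ContinuousMap.add_apply, ContinuousMap.smul_apply] at hle
    linarith [mul_le_mul_of_nonneg_left hdist hk]
  obtain ⟨s, hs, hslope⟩ := exists_maximizer_le_apply_of_frequently
    (fun x ↦ hasStrictFDerivAt_of_hasFDerivAt_of_continuousAt (.of_forall hf) hf'.continuousAt)
    q (v.comp q) (Eventually.frequently (eventually_mem_nhdsWithin.mono hperturb))
  exact (hv_descent (q s) ⟨mem_range_self s, hs⟩).not_ge hslope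

theorem minimax_via_ekeland_general [CompleteSpace X] (K₀ : Set K) (hK₀ne : K₀.Nonempty)
    (μ : K₀ → X) (hderiv : ∀ x, HasFDerivAt f (f' x) x) (hcont : Continuous f') (c d : ℝ)
    (hc : c = sInf {a : ℝ | ∃ m : C(K, X), (∀ s : K₀, m ↑s = μ s) ∧ a = ⨆ s : K, f (m s)})
    (hd : d = ⨆ s : K₀, f (μ s)) (hcd : d < c) (ε : ℝ) (hε : 0 < ε)
    (p : C(K, X)) (hp : ∀ s : K₀, p ↑s = μ s) (hpmax : (⨆ s : K, f (p s)) ≤ c + ε) :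
    ∃ u : X, (c ≤ f u ∧ f u ≤ ⨆ s : K, f (p s)) ∧
      Metric.infDist u (range p) ≤ √ε ∧ ‖f' u‖ ≤ √ε := by
  have hfc : Continuous f := continuous_iff_continuousAt.2 fun x ↦ (hderiv x).continuousAt
  have : Nonempty K := ⟨hK₀ne.some⟩
  have hbdd := bddBelow_iSup_image_admissibleMaps hfc hK₀ne μ
  have hc_le (m : C(K, X)) (hm : m ∈ admissibleMaps K₀ μ) : c ≤ ⨆ s, f (m s) := by
    have himage : c = sInf ((fun m : C(K, X) ↦ ⨆ s, f (m s)) '' admissibleMaps K₀ μ) := by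
      rw [hc]
      congr 1
      ext a
      simp [admissibleMaps, eq_comm]
    exact himage.trans_le (csInf_le hbdd (mem_image_of_mem _ hm))
  have hle_d (s : K₀) : f (μ s) ≤ d := by
    have hbdd_μ : BddAbove (range fun s : K₀ ↦ f (μ s)) := by
      simp only [← hp]
      exact (bddAbove_range_apply_continuousMap hfc p).mono
        (range_comp_subset_range Subtype.val (f ∘ p))
    exact hd ▸ le_ciSup hbdd_μ s
  have hk : 0 < √ε := Real.sqrt_pos.2 hε
  obtain ⟨q, hqE, hqp, hq⟩ :=
    exists_ekeland_minimizer_iSup hfc (isClosed_admissibleMaps K₀ μ) hbdd hk hp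
  have hcq : c ≤ ⨆ s, f (q s) := hc_le q hqE
  obtain ⟨s, hs, hslope⟩ := exists_maximizer_norm_fderiv_le hderiv hcont hk.le
    (fun s hs ↦ (hqE ⟨s, hs⟩).symm ▸ hle_d ⟨s, hs⟩) (hcd.trans_le hcq)
    fun m hm ↦ hq m fun s ↦ (hm s.2).trans (hqE s)
  have hdist : dist q p ≤ √ε := by
    refine le_of_mul_le_mul_left ?_ hk
    linarith [Real.mul_self_sqrt hε.le]
  refine ⟨q s, ⟨hcq.trans_eq hs.symm, ?_⟩, ?_, hslope⟩
  · exact hs.trans_le (le_of_add_le_of_nonneg_left hqp (by positivity))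
  · calc Metric.infDist (q s) (range p) ≤ dist (q s) (p s) :=
          Metric.infDist_le_dist_of_mem (mem_range_self s)
      _ ≤ dist q p := ContinuousMap.dist_apply_le_dist s
      _ ≤ √ε := hdist

end Minimax

/-- **Minimax theorem via Ekeland's variational principle.**
Let `X` be a real Banach space, `K` a compact metric space, `K₀ ⊆ K` closed,
`μ : K₀ → X` continuous, and `E = {m ∈ C(K,X) : m|_{K₀} = μ}`. Let `f` be a `C¹`
functional, `c = inf_{m ∈ E} max_{s ∈ K} f (m s)` and `d = max_{s ∈ K₀} f (μ s)`,
and suppose `c > d`. Then for every `ε ∈ (0, c - d)` and every `p ∈ E` with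
`max_K f ∘ p ≤ c + ε` there is `u ∈ X` with `c - ε ≤ f u ≤ max_K f ∘ p`,
`dist (u, p '' K) ≤ √ε` and `‖f' u‖ ≤ √ε`. -/
theorem minimax_via_ekeland
    {X : Type*} [NormedAddCommGroup X] [NormedSpace ℝ X] [CompleteSpace X]
    {K : Type*} [MetricSpace K] [CompactSpace K]
    (K₀ : Set K) (hK₀closed : IsClosed K₀) (hK₀ne : K₀.Nonempty)
    (μ : C(K₀, X))
    (f : X → ℝ) (f' : X → (X →L[ℝ] ℝ))
    (hderiv : ∀ x, HasFDerivAt f (f' x) x) (hcont : Continuous f')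
    (c d : ℝ)
    (hc : c = sInf { a : ℝ | ∃ m : C(K, X), (∀ s : K₀, m ↑s = μ s) ∧
      a = ⨆ s : K, f (m s) })
    (hd : d = ⨆ s : K₀, f (μ s))
    (hcd : d < c)
    (ε : ℝ) (hε : ε ∈ Set.Ioo 0 (c - d))
    (p : C(K, X)) (hp : ∀ s : K₀, p ↑s = μ s)
    (hpmax : (⨆ s : K, f (p s)) ≤ c + ε) :
    ∃ u : X, (c - ε ≤ f u ∧ f u ≤ ⨆ s : K, f (p s)) ∧
      Metric.infDist u (Set.range p) ≤ Real.sqrt ε ∧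
      ‖f' u‖ ≤ Real.sqrt ε := by
  obtain ⟨u, ⟨hcu, hup⟩, hu⟩ :=
    minimax_via_ekeland_general K₀ hK₀ne μ hderiv hcont c d hc hd hcd ε hε.1 p hp hpmax
  exact ⟨u, ⟨(sub_le_self c hε.1.le).trans hcu, hup⟩, hu⟩
end

section
/- Let X be a real Banach space, Q ⊆ X compact with relative boundary ∂Q ⊆ Q, S ⊆ X closed, and suppose S and ∂Q link, i.e. S ∩ ∂Q = ∅ and γ(Q) ∩ S ≠ ∅ for every γ ∈ E = {γ ∈ C(Q, X) : γ = id on ∂Q}. Let g ∈ E and let ε > 0 satisfy ε < dist(∂Q, S). Set A = {x ∈ Q : dist(g(x), S) < ε}, which is nonempty. Then for every continuous map k : Ā → X (Ā the closure of A in Q) such that k = g on the topological boundary of A in Q, we have k(Ā) ∩ S ≠ ∅. -/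
open Set Filter

/-!
Glue `k` on `A` to `g` on `Q \ A`. The result is continuous because `k` and `g` agree on the
boundary of `A` in `Q`, and it is still the identity on `bQ` because `bQ` is farther than `ε` from
`S`, hence disjoint from `A`. By linking, the glued map hits `S`; it cannot do so on `Q \ A`,
where it equals `g` and stays at distance at least `ε` from `S`, so it does so on `A`, where it
equals `k`.
-/

section TopologicalSpace

variable {X Y : Type*} [TopologicalSpace X] [TopologicalSpace Y]
  {Q B U : Set X} {S : Set Y} {f g k : X → Y}

/-- `g` is essential on `Q` relative to `B`, with respect to `S`: no continuous map on `Q` with the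
same values as `g` on `B` avoids `S`. For `g = id` and `B` disjoint from `S` this says that `S` and
`B` link. Maps on `Q` are encoded as total functions that are continuous on `Q`. -/
def IsEssentialOn (g : X → Y) (Q B : Set X) (S : Set Y) : Prop :=
  ∀ γ : X → Y, ContinuousOn γ Q → EqOn γ g B → (γ '' Q ∩ S).Nonempty

theorem IsEssentialOn.congr (hf : IsEssentialOn f Q B S) (hgf : EqOn g f B) :
    IsEssentialOn g Q B S :=
  fun γ hγ hγg => hf γ hγ (hγg.trans hgf)

theorem IsEssentialOn.exists_mem (hg : IsEssentialOn g Q B S) (hgQ : ContinuousOn g Q) :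
    ∃ x ∈ Q, g x ∈ S := by
  obtain ⟨_, ⟨x, hxQ, rfl⟩, hxS⟩ := hg g hgQ (eqOn_refl g B)
  exact ⟨x, hxQ, hxS⟩

theorem continuousOn_piecewise_inter_of_isOpen [∀ x, Decidable (x ∈ Q ∩ U)] (hU : IsOpen U)
    (hk : ContinuousOn k (Q ∩ closure (Q ∩ U))) (hg : ContinuousOn g (Q \ U))
    (hkg : EqOn k g ((Q ∩ closure (Q ∩ U)) \ (Q ∩ U))) :
    ContinuousOn ((Q ∩ U).piecewise k g) Q := by
  have eqOn_k : EqOn ((Q ∩ U).piecewise k g) k (Q ∩ closure (Q ∩ U)) := fun x hx => by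
    by_cases hxU : x ∈ Q ∩ U
    · exact piecewise_eq_of_mem _ _ _ hxU
    · exact (piecewise_eq_of_notMem _ _ _ hxU).trans (hkg ⟨hx, hxU⟩).symm
  have eqOn_g : EqOn ((Q ∩ U).piecewise k g) g (Q \ U) := fun x hx =>
    piecewise_eq_of_notMem _ _ _ fun hxU => hx.2 hxU.2
  intro x hxQ
  have within_inter : ContinuousWithinAt ((Q ∩ U).piecewise k g) (Q ∩ U) x := by
    by_cases hx : x ∈ closure (Q ∩ U)
    · exact (hk.congr eqOn_k x ⟨hxQ, hx⟩).mono (subset_inter inter_subset_left subset_closure)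
    · exact continuousWithinAt_of_notMem_closure hx
  have within_diff : ContinuousWithinAt ((Q ∩ U).piecewise k g) (Q \ U) x := by
    by_cases hx : x ∈ U
    · exact continuousWithinAt_of_notMem_closure fun hx' =>
        closure_minimal (fun _ hy => hy.2) hU.isClosed_compl hx' hx
    · exact hg.congr eqOn_g x ⟨hxQ, hx⟩
  simpa only [inter_union_sdiff] using within_inter.union within_diff

theorem IsEssentialOn.localize (hgS : IsEssentialOn g Q B S) (hg : ContinuousOn g Q)
    (hU : IsOpen U) (hBU : Disjoint B (Q ∩ U)) (hSU : Q ∩ g ⁻¹' S ⊆ U) :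
    IsEssentialOn g (Q ∩ closure (Q ∩ U)) ((Q ∩ closure (Q ∩ U)) \ (Q ∩ U)) S := by
  classical
  intro k hk hkg
  have hγ : ContinuousOn ((Q ∩ U).piecewise k g) Q :=
    continuousOn_piecewise_inter_of_isOpen hU hk (hg.mono sdiff_subset) hkg
  have hγB : EqOn ((Q ∩ U).piecewise k g) g B := fun x hx =>
    piecewise_eq_of_notMem _ _ _ (disjoint_left.mp hBU hx)
  obtain ⟨_, ⟨x, hxQ, rfl⟩, hxS⟩ := hgS _ hγ hγB
  by_cases hx : x ∈ Q ∩ U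
  · rw [piecewise_eq_of_mem _ _ _ hx] at hxS
    exact ⟨k x, mem_image_of_mem k ⟨hxQ, subset_closure hx⟩, hxS⟩
  · rw [piecewise_eq_of_notMem _ _ _ hx] at hxS
    exact absurd ⟨hxQ, hSU ⟨hxQ, hxS⟩⟩ hx

theorem IsEssentialOn.localize_preimage {V : Set Y} (hgS : IsEssentialOn g Q B S)
    (hg : ContinuousOn g Q) (hV : IsOpen V) (hSV : S ⊆ V) (hBV : ∀ x ∈ B, g x ∉ V) :
    IsEssentialOn g (Q ∩ closure (Q ∩ g ⁻¹' V))
      ((Q ∩ closure (Q ∩ g ⁻¹' V)) \ (Q ∩ g ⁻¹' V)) S := by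
  obtain ⟨U, hU, hVU⟩ := continuousOn_iff'.mp hg V hV
  rw [inter_comm, inter_comm U] at hVU
  rw [hVU]
  refine hgS.localize hg hU (disjoint_left.mpr fun x hxB hxU => ?_) fun x hx => ?_
  · exact hBV x hxB (hVU.superset hxU).2
  · exact (hVU.subset ⟨hx.1, hSV hx.2⟩).2

end TopologicalSpace

section PseudoMetricSpace

variable {X : Type*} [PseudoMetricSpace X] {Q B S : Set X} {g : X → X} {x : X} {ε : ℝ}

theorem sInf_dist_le_infDist (hS : S.Nonempty) (hx : x ∈ B) :
    sInf { r : ℝ | ∃ a ∈ B, ∃ b ∈ S, r = dist a b } ≤ Metric.infDist x S := by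
  have bddBelow : BddBelow { r : ℝ | ∃ a ∈ B, ∃ b ∈ S, r = dist a b } :=
    ⟨0, by rintro _ ⟨a, -, b, -, rfl⟩; exact dist_nonneg⟩
  exact (Metric.le_infDist hS).mpr fun y hy => csInf_le bddBelow ⟨x, hx, y, hy, rfl⟩

theorem localized_linking_general (hlink : IsEssentialOn id Q B S) (hg : ContinuousOn g Q)
    (hgid : EqOn g id B) (hε : 0 < ε)
    (hεsep : ε < sInf { r : ℝ | ∃ a ∈ B, ∃ b ∈ S, r = dist a b }) :
    { x ∈ Q | Metric.infDist (g x) S < ε }.Nonempty ∧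
      IsEssentialOn g (Q ∩ closure { x ∈ Q | Metric.infDist (g x) S < ε })
        ((Q ∩ closure { x ∈ Q | Metric.infDist (g x) S < ε }) \
          { x ∈ Q | Metric.infDist (g x) S < ε }) S := by
  have hgS : IsEssentialOn g Q B S := hlink.congr hgid
  have near : S ⊆ { y | Metric.infDist y S < ε } := fun y hy =>
    (Metric.infDist_zero_of_mem hy).trans_lt hε
  obtain ⟨x, hxQ, hxS⟩ := hgS.exists_mem hg
  have far : ∀ b ∈ B, ¬ Metric.infDist (g b) S < ε := fun b hb => by
    rw [hgid hb, not_lt]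
    exact hεsep.le.trans (sInf_dist_le_infDist ⟨g x, hxS⟩ hb)
  have isOpen_near : IsOpen { y | Metric.infDist y S < ε } :=
    isOpen_lt (Metric.continuous_infDist_pt S) continuous_const
  exact ⟨⟨x, hxQ, near hxS⟩, hgS.localize_preimage hg isOpen_near near far⟩

end PseudoMetricSpace

/-- **Localized linking property.** Let `X` be a real Banach space, `Q ⊆ X`
compact with relative boundary `bQ ⊆ Q`, `S ⊆ X` closed, and suppose `S` and
`bQ` link. Let `g ∈ E = {γ ∈ C(Q,X) : γ = id on bQ}` and `0 < ε < dist(bQ, S)`.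
Set `A = {x ∈ Q : dist (g x, S) < ε}`; then `A` is nonempty, and every
continuous map `k : Ā → X` agreeing with `g` on the topological boundary of
`A` in `Q` (which, `A` being open in `Q`, is `closure A \ A`) satisfies
`k (Ā) ∩ S ≠ ∅`. -/
theorem localized_linking
    {X : Type*} [NormedAddCommGroup X] [NormedSpace ℝ X] [CompleteSpace X]
    (Q bQ S : Set X) (hQcompact : IsCompact Q) (hbQ : bQ ⊆ Q)
    (hSclosed : IsClosed S)
    -- `S` and `bQ` link
    (hdisj : S ∩ bQ = ∅)
    (hlink : ∀ γ : X → X, ContinuousOn γ Q → (∀ x ∈ bQ, γ x = x) →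
      (γ '' Q ∩ S).Nonempty)
    -- `g ∈ E`
    (g : X → X) (hgcont : ContinuousOn g Q) (hgid : ∀ x ∈ bQ, g x = x)
    -- `0 < ε < dist(bQ, S)`
    (ε : ℝ) (hε : 0 < ε)
    (hεsep : ε < sInf { r : ℝ | ∃ a ∈ bQ, ∃ b ∈ S, r = dist a b }) :
    ({ x ∈ Q | Metric.infDist (g x) S < ε } : Set X).Nonempty ∧
    ∀ k : X → X,
      ContinuousOn k (closure { x ∈ Q | Metric.infDist (g x) S < ε }) →
      (∀ x ∈ closure { x ∈ Q | Metric.infDist (g x) S < ε } \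
          { x ∈ Q | Metric.infDist (g x) S < ε }, k x = g x) →
      (k '' closure { x ∈ Q | Metric.infDist (g x) S < ε } ∩ S).Nonempty := by
  have hA : closure { x ∈ Q | Metric.infDist (g x) S < ε } ⊆ Q :=
    closure_minimal (sep_subset _ _) hQcompact.isClosed
  have localized := localized_linking_general hlink hgcont hgid hε hεsep
  rwa [inter_eq_right.mpr hA] at localized
end
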